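/- Let K be a number field and S a finite set of nonzero prime ideals of O_K such that 2 and the discriminant of f are invertible in O := O_{K,S} (i.e. S contains every prime dividing 2·disc(f)), where f ∈ O_K[X] is monic, squarefree, of odd degree at least 3. Let A := O[X][Y]/⟨Y² − f⟩ and B := K[X][Y]/⟨Y² − f⟩. Then for every nonzero ideal J of B there exist an ideal I of A, invertible as a fractional ideal of A, and nonzero elements g, h ∈ B such that ⟨g⟩·J = ⟨h⟩·(I·B) as ideals of B, where I·B is the ideal of B generated by the image of I. (This is the surjectivity of the restriction-to-the-generic-fibre map Pic(A) → Pic(B).) -/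

import Mathlib

open Polynomial FractionalIdeal IsDedekindDomain NumberField

open scoped nonZeroDivisors

/-- The ring of `S`-integers of a number field `K`. -/
noncomputable abbrev SInt (K : Type*) [Field K] [NumberField K]
    (S : Finset (HeightOneSpectrum (𝓞 K))) : Type _ :=
  ((S : Set (HeightOneSpectrum (𝓞 K))).integer K)

/-- `R[X][Y]/⟨Y² − f⟩` for a commutative ring `R`. -/
noncomputable def HypRingR (R : Type*) [CommRing R] (f : Polynomial R) : Type _ :=
  Polynomial (Polynomial R) ⧸ Ideal.span {(X : Polynomial (Polynomial R)) ^ 2 - C f}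

noncomputable instance (R : Type*) [CommRing R] (f : Polynomial R) : CommRing (HypRingR R f) :=
  Ideal.Quotient.commRing _

/-- The quotient map `R[X][Y] → R[X][Y]/⟨Y² − f⟩`. -/
noncomputable def HypRingR.mk (R : Type*) [CommRing R] (f : Polynomial R) :
    Polynomial (Polynomial R) →+* HypRingR R f :=
  Ideal.Quotient.mk _

/-- Functoriality of `R[X][Y]/⟨Y² − f⟩` in the base ring `R`: a ring homomorphism
`φ : R → S` induces `R[X][Y]/⟨Y² − f⟩ → S[X][Y]/⟨Y² − f^φ⟩`. -/
noncomputable def HypMap (R S : Type*) [CommRing R] [CommRing S] (φ : R →+* S)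
    (f : Polynomial R) : HypRingR R f →+* HypRingR S (f.map φ) :=
  Ideal.Quotient.lift _
    ((HypRingR.mk S (f.map φ)).comp (Polynomial.mapRingHom (Polynomial.mapRingHom φ)))
    (by
      intro p hp
      obtain ⟨q, hq⟩ := Ideal.mem_span_singleton.mp hp
      obtain rfl := hq
      have hmap : (Polynomial.mapRingHom (Polynomial.mapRingHom φ))
          ((X : Polynomial (Polynomial R)) ^ 2 - C f) =
          (X : Polynomial (Polynomial S)) ^ 2 - C (f.map φ) := by
        simp [Polynomial.map_pow]
      have h0 : (HypRingR.mk S (f.map φ))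
          ((X : Polynomial (Polynomial S)) ^ 2 - C (f.map φ)) = 0 := by
        apply Ideal.Quotient.eq_zero_iff_mem.mpr
        exact Ideal.subset_span rfl
      show (HypRingR.mk S (f.map φ))
          ((Polynomial.mapRingHom (Polynomial.mapRingHom φ))
            (((X : Polynomial (Polynomial R)) ^ 2 - C f) * q)) = 0
      rw [_root_.map_mul, _root_.map_mul, hmap, h0, zero_mul])


/-- `I` is principal locally at `m`. -/
def LocPrin {R : Type*} [CommRing R] (I m : Ideal R) : Prop :=
  ∃ x ∈ I, ∃ s, s ∉ m ∧ ∀ y ∈ I, ∃ c, s * y = x * c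

theorem locPrin_of_pointwise {R : Type*} [CommRing R] [IsNoetherianRing R]
    (I m : Ideal R) [m.IsPrime] (x : R) (hx : x ∈ I)
    (key : ∀ y ∈ I, ∃ u, u ∉ m ∧ ∃ c, u * y = x * c) : LocPrin I m := by
  obtain ⟨T, hT⟩ := (inferInstance : IsNoetherianRing R).noetherian I
  choose! u hu hc using key
  classical
  refine ⟨x, hx, ∏ y ∈ T, u y, ?_, ?_⟩
  · intro hmem
    obtain ⟨y, hy, hy'⟩ := (Ideal.IsPrime.prod_mem_iff).mp hmem
    exact hu y (hT ▸ Ideal.subset_span hy) hy'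
  · intro y hy
    change x ∣ _
    rw [← Ideal.mem_span_singleton]
    rw [← hT] at hy
    refine Submodule.span_induction ?_ ?_ ?_ ?_ hy
    · intro y hy
      rw [Ideal.mem_span_singleton]
      have h1 : x ∣ u y * y := hc y (hT ▸ Ideal.subset_span hy)
      exact h1.trans (mul_dvd_mul_right (Finset.dvd_prod_of_mem u hy) y)
    · simp
    · intro a b _ _ ha hb
      rw [mul_add]; exact add_mem ha hb
    · intro r a _ ha
      rw [smul_eq_mul, mul_left_comm]; exact Ideal.mul_mem_left _ _ ha

theorem locPrin_of_maximal {R : Type*} [CommRing R] [IsDomain R] [IsNoetherianRing R]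
    (m : Ideal R) [m.IsPrime] (hm : LocPrin m m) (I : Ideal R) : LocPrin I m := by
  obtain ⟨z, hz, s, hs, h⟩ := hm
  let L := Localization.AtPrime m
  have : IsDomain L := IsLocalization.isDomain_localization m.primeCompl_le_nonZeroDivisors
  have : IsNoetherianRing L := IsLocalization.isNoetherianRing m.primeCompl L inferInstance
  have hp : (IsLocalRing.maximalIdeal L).IsPrincipal := by
    refine ⟨⟨algebraMap R L z, ?_⟩⟩
    rw [← Localization.AtPrime.map_eq_maximalIdeal]
    apply le_antisymm
    · rw [Ideal.map_le_iff_le_comap]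
      intro y hy
      obtain ⟨c, hc⟩ := h y hy
      have hu : IsUnit (algebraMap R L s) :=
        IsLocalization.map_units L (⟨s, hs⟩ : m.primeCompl)
      change algebraMap R L y ∈ Ideal.span {algebraMap R L z}
      rw [← Ideal.unit_mul_mem_iff_mem _ hu, ← map_mul, hc, map_mul]
      exact Ideal.mul_mem_right _ _ (Ideal.mem_span_singleton_self _)
    · change Ideal.span {algebraMap R L z} ≤ _
      rw [Ideal.span_singleton_le_iff_mem]
      exact Ideal.mem_map_of_mem _ hz
  have hpir : IsPrincipalIdealRing L :=
    ((tfae_of_isNoetherianRing_of_isLocalRing_of_isDomain L).out 4 0).mp hp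
  obtain ⟨g, hg⟩ := (hpir.principal (I.map (algebraMap R L))).principal
  have hgm : g ∈ I.map (algebraMap R L) := by rw [hg]; exact Ideal.mem_span_singleton_self _
  obtain ⟨⟨⟨x, hx⟩, ⟨t, ht⟩⟩, hxt⟩ := (IsLocalization.mem_map_algebraMap_iff m.primeCompl L).mp hgm
  simp only at hxt
  have key : ∀ y ∈ I, ∃ u, u ∉ m ∧ ∃ c, u * y = x * c := by
    intro y hy
    have : algebraMap R L y ∈ I.map (algebraMap R L) := Ideal.mem_map_of_mem _ hy
    rw [hg] at this
    obtain ⟨c, hc⟩ := Ideal.mem_span_singleton.mp this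
    obtain ⟨⟨c', ⟨d, hd⟩⟩, hcd⟩ := IsLocalization.surj m.primeCompl c
    simp only at hcd
    refine ⟨t * d, fun hmem => (‹m.IsPrime›.mem_or_mem hmem).elim ht hd, c', ?_⟩
    apply IsLocalization.injective L m.primeCompl_le_nonZeroDivisors
    simp only [map_mul, hc, ← hcd, ← hxt]
    ring
  exact locPrin_of_pointwise I m x hx key

theorem isUnit_of_locPrin {R : Type*} [CommRing R] [IsDomain R] (I : Ideal R) (hI : I ≠ ⊥)
    (h : ∀ m : Ideal R, m.IsMaximal → LocPrin I m) :
    IsUnit (I : FractionalIdeal R⁰ (FractionRing R)) := by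
  have hI0 : (I : FractionalIdeal R⁰ (FractionRing R)) ≠ 0 := by
    rwa [ne_eq, FractionalIdeal.coeIdeal_eq_zero]
  rw [← FractionalIdeal.mul_inv_cancel_iff_isUnit]
  have hle : (I : FractionalIdeal R⁰ (FractionRing R)) * (I : FractionalIdeal R⁰ (FractionRing R))⁻¹ ≤ 1 := by
    rw [FractionalIdeal.mul_le]
    intro i hi j hj
    rw [FractionalIdeal.mem_inv_iff hI0] at hj
    rw [mul_comm]; exact hj i hi
  obtain ⟨Q, hQ⟩ := FractionalIdeal.le_one_iff_exists_coeIdeal.mp hle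
  rw [← hQ, FractionalIdeal.coeIdeal_eq_one, Ideal.one_eq_top]
  by_contra hne
  obtain ⟨m, hm, hQm⟩ := Ideal.exists_le_maximal Q hne
  obtain ⟨x, hx, s, hs, hc⟩ := h m hm
  have hs0 : s ≠ 0 := fun h => hs (h ▸ zero_mem _)
  have hx0 : x ≠ 0 := by
    rintro rfl
    apply hI
    rw [eq_bot_iff]
    intro y hy
    obtain ⟨c, hc⟩ := hc y hy
    simpa [hs0] using hc
  have hx0' : algebraMap R (FractionRing R) x ≠ 0 := by simpa using hx0
  apply hs
  apply hQm
  have : algebraMap R (FractionRing R) s ∈ (Q : FractionalIdeal R⁰ (FractionRing R)) := by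
    rw [hQ]
    have e : algebraMap R (FractionRing R) s = algebraMap R (FractionRing R) x *
      (algebraMap R (FractionRing R) s / algebraMap R (FractionRing R) x) := by field_simp
    rw [e]
    apply FractionalIdeal.mul_mem_mul
    · exact FractionalIdeal.mem_coeIdeal_of_mem _ hx
    · rw [FractionalIdeal.mem_inv_iff hI0]
      intro y hy
      obtain ⟨y, hy2, rfl⟩ := (FractionalIdeal.mem_coeIdeal _).mp hy
      obtain ⟨c, hc⟩ := hc y hy2
      rw [FractionalIdeal.mem_one_iff]
      refine ⟨c, ?_⟩
      field_simp
      rw [← map_mul, ← map_mul, hc, mul_comm]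
  obtain ⟨s', hs', e⟩ := (FractionalIdeal.mem_coeIdeal _).mp this
  rwa [← IsFractionRing.injective R (FractionRing R) e]

theorem hyp_Y_sq {R : Type*} [CommRing R] (f : R[X]) :
    HypRingR.mk R f X * HypRingR.mk R f X = HypRingR.mk R f (C f) := by
  rw [← sub_eq_zero, ← map_mul, ← map_sub]
  apply Ideal.Quotient.eq_zero_iff_mem.mpr
  rw [← pow_two]
  exact Ideal.subset_span rfl

theorem hyp_mk_surj {R : Type*} [CommRing R] (f : R[X]) :
    Function.Surjective (HypRingR.mk R f) := Ideal.Quotient.mk_surjective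

theorem hyp_rep {R : Type*} [CommRing R] [Nontrivial R] (f : R[X]) (z : HypRingR R f) :
    ∃ a b : R[X], z = HypRingR.mk R f (C a) + HypRingR.mk R f (C b) * HypRingR.mk R f X := by
  obtain ⟨q, rfl⟩ := hyp_mk_surj f z
  have hm : ((X : R[X][X]) ^ 2 - C f).Monic := monic_X_pow_sub_C f two_ne_zero
  have hd : ((X : R[X][X]) ^ 2 - C f).natDegree = 2 := natDegree_X_pow_sub_C
  have h1 : (q %ₘ ((X : R[X][X]) ^ 2 - C f)).natDegree ≤ 1 := by
    have := natDegree_modByMonic_lt q hm (by intro h; rw [h] at hd; simp at hd)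
    omega
  obtain ⟨b, a, hab⟩ := exists_eq_X_add_C_of_natDegree_le_one h1
  refine ⟨a, b, ?_⟩
  have h2 := modByMonic_add_div q ((X : R[X][X]) ^ 2 - C f)
  conv_lhs => rw [← h2]
  have h0 : HypRingR.mk R f ((X : R[X][X]) ^ 2 - C f) = 0 := by
    rw [map_sub, pow_two, map_mul, hyp_Y_sq, sub_self]
  rw [map_add, map_mul, h0, zero_mul, add_zero, hab, map_add, map_mul, add_comm]

theorem hyp_indep {R : Type*} [CommRing R] [Nontrivial R] (f : R[X]) {a b : R[X]}
    (h : HypRingR.mk R f (C a) + HypRingR.mk R f (C b) * HypRingR.mk R f X = 0) :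
    a = 0 ∧ b = 0 := by
  have hm : ((X : R[X][X]) ^ 2 - C f).Monic := monic_X_pow_sub_C f two_ne_zero
  have hd : ((X : R[X][X]) ^ 2 - C f).degree = 2 := degree_X_pow_sub_C two_pos f
  rw [← map_mul, ← map_add] at h
  have h1 := Ideal.mem_span_singleton.mp (Ideal.Quotient.eq_zero_iff_mem.mp h)
  have h2 : C a + C b * X = (0 : R[X][X]) := by
    by_contra hne
    have := hm.not_dvd_of_degree_lt hne (by
      rw [hd, add_comm]
      exact degree_linear_le.trans_lt (by norm_num))
    exact this h1
  constructor
  · simpa using congrArg (fun p => coeff p 0) h2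
  · simpa using congrArg (fun p => coeff p 1) h2

theorem hyp_C_inj {R : Type*} [CommRing R] [Nontrivial R] (f : R[X]) {a : R[X]}
    (h : HypRingR.mk R f (C a) = 0) : a = 0 :=
  (hyp_indep f (a := a) (b := 0) (by simp [h])).1

theorem hyp_norm_ne {R : Type*} [CommRing R] [IsDomain R] (f : R[X]) (hodd : Odd f.natDegree)
    {a b : R[X]} (h : a ^ 2 - f * b ^ 2 = 0) : a = 0 ∧ b = 0 := by
  have hf : f ≠ 0 := by rintro rfl; simp at hodd
  by_cases hb : b = 0
  · subst hb
    simpa using h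
  · exfalso
    have h1 : a ^ 2 = f * b ^ 2 := sub_eq_zero.mp h
    have h2 := congrArg natDegree h1
    rw [natDegree_mul hf (pow_ne_zero _ hb), natDegree_pow, natDegree_pow] at h2
    obtain ⟨k, hk⟩ := hodd
    omega

theorem hyp_conj_mul {R : Type*} [CommRing R] (f : R[X]) (a b : R[X]) :
    (HypRingR.mk R f (C a) + HypRingR.mk R f (C b) * HypRingR.mk R f X) *
      (HypRingR.mk R f (C a) - HypRingR.mk R f (C b) * HypRingR.mk R f X) =
    HypRingR.mk R f (C (a ^ 2 - f * b ^ 2)) := by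
  simp only [map_sub, map_mul, map_pow]
  linear_combination (-(HypRingR.mk R f (C b)) ^ 2) * hyp_Y_sq f

theorem hyp_isDomain {R : Type*} [CommRing R] [IsDomain R] (f : R[X]) (hodd : Odd f.natDegree) :
    IsDomain (HypRingR R f) := by
  have : Nontrivial (HypRingR R f) := by
    refine ⟨0, 1, fun h => ?_⟩
    have : (1 : R[X]) = 0 := hyp_C_inj f (by rw [C_1, map_one, ← h])
    exact one_ne_zero this
  have : NoZeroDivisors (HypRingR R f) := by
    refine ⟨fun {x y} hxy => ?_⟩
    by_contra! hne
    obtain ⟨a, b, rfl⟩ := hyp_rep f x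
    obtain ⟨c, d, rfl⟩ := hyp_rep f y
    have h1 : HypRingR.mk R f (C (a ^ 2 - f * b ^ 2)) *
      (HypRingR.mk R f (C c) + HypRingR.mk R f (C d) * HypRingR.mk R f X) = 0 := by
      rw [← hyp_conj_mul, mul_right_comm, hxy, zero_mul]
    have h1' : HypRingR.mk R f (C ((a ^ 2 - f * b ^ 2) * c)) +
      HypRingR.mk R f (C ((a ^ 2 - f * b ^ 2) * d)) * HypRingR.mk R f X = 0 := by
      rw [C_mul, C_mul, RingHom.map_mul, RingHom.map_mul, mul_assoc, ← mul_add, h1]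
    obtain ⟨h2, h3⟩ := hyp_indep f h1'
    have hn : a ^ 2 - f * b ^ 2 ≠ 0 := by
      intro h0
      obtain ⟨rfl, rfl⟩ := hyp_norm_ne f hodd h0
      simp at hne
    have hc : c = 0 := (mul_eq_zero.mp h2).resolve_left hn
    have hd : d = 0 := (mul_eq_zero.mp h3).resolve_left hn
    subst hc hd
    simp at hne
  exact NoZeroDivisors.to_isDomain _

theorem hyp_isNoetherian {R : Type*} [CommRing R] [IsNoetherianRing R] (f : R[X]) :
    IsNoetherianRing (HypRingR R f) :=
  isNoetherianRing_of_surjective _ _ (HypRingR.mk R f) (hyp_mk_surj f)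

/-- Over a field of characteristic not two, with `f` separable, the coordinate ring is locally
principal. -/
theorem hyp_field_locPrin {k : Type*} [Field k] (f : k[X]) (hodd : Odd f.natDegree)
    (h2 : (2 : k) ≠ 0) (hsep : IsCoprime f (derivative f)) (m : Ideal (HypRingR k f)) [hm : m.IsPrime]
    (I : Ideal (HypRingR k f)) : LocPrin I m := by
  have := hyp_isDomain f hodd
  have := hyp_isNoetherian f
  apply locPrin_of_maximal
  have hsq : Squarefree f := Polynomial.Separable.squarefree hsep
  set j : k[X] →+* HypRingR k f := (HypRingR.mk k f).comp C with hj
  set y := HypRingR.mk k f X with hy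
  have hyy : y * y = j f := hyp_Y_sq f
  have hrep : ∀ z, ∃ a b, z = j a + j b * y := hyp_rep f
  obtain ⟨P, hP⟩ := (IsPrincipalIdealRing.principal (m.comap j)).principal
  have hPd : ∀ a, j a ∈ m ↔ P ∣ a := by
    intro a
    rw [← Ideal.mem_span_singleton, ← Ideal.submodule_span_eq, ← hP]; rfl
  have hPm : j P ∈ m := (hPd P).mpr dvd_rfl
  have hprime : (m.comap j).IsPrime := Ideal.comap_isPrime j m
  by_cases hym : y ∈ m
  · have hfm : j f ∈ m := hyy ▸ Ideal.mul_mem_left _ _ hym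
    obtain ⟨g, hg⟩ := (hPd f).mp hfm
    refine ⟨y, hym, j g, ?_, ?_⟩
    · intro hgm
      obtain ⟨e, he⟩ := (hPd g).mp hgm
      have hu : IsUnit P := hsq P ⟨e, by rw [hg, he, mul_assoc]⟩
      exact hm.ne_top (Ideal.eq_top_of_isUnit_mem _ hPm (hu.map j))
    · intro z hz
      obtain ⟨a, b, rfl⟩ := hrep z
      have ha : j a ∈ m := by
        have := sub_mem hz (Ideal.mul_mem_left _ (j b) hym)
        simpa using this
      obtain ⟨c, rfl⟩ := (hPd a).mp ha
      refine ⟨y * j c + j g * j b, ?_⟩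
      have hg' := congrArg j hg
      simp only [map_mul] at hg' ⊢
      linear_combination (-(j c)) * hyy - j c * hg'
  · by_cases hall : ∀ z ∈ m, ∃ c, z = j P * c
    · refine ⟨j P, hPm, 1, fun h => hm.ne_top ((Ideal.eq_top_iff_one _).mpr h), ?_⟩
      simpa using hall
    · push Not at hall
      obtain ⟨z, hz, hzP⟩ := hall
      obtain ⟨a, b, rfl⟩ := hrep z
      have hb : ¬ P ∣ b := by
        rintro ⟨b', rfl⟩
        have ha : j a ∈ m := by
          have := sub_mem hz (Ideal.mul_mem_right (j b' * y) _ hPm)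
          simpa [mul_assoc] using this
        obtain ⟨c, rfl⟩ := (hPd a).mp ha
        exact hzP (j c + j b' * y) (by simp only [map_mul]; ring)
      have hb0 : b ≠ 0 := by rintro rfl; simp at hb
      have hP0 : P ≠ 0 := by
        rintro rfl
        have h1 : j (a ^ 2 - f * b ^ 2) ∈ m := by
          have := hyp_conj_mul f a b
          change _ = j (a ^ 2 - f * b ^ 2) at this
          rw [← this]
          exact Ideal.mul_mem_right _ _ hz
        rw [hPd, zero_dvd_iff] at h1
        exact hb0 (hyp_norm_ne f hodd h1).2
      have hPprime : Prime P := by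
        rw [← Ideal.span_singleton_prime hP0, ← Ideal.submodule_span_eq, ← hP]
        exact hprime
      obtain ⟨u, w, huw⟩ := (hPprime.irreducible.coprime_iff_not_dvd).mpr hb
      -- `u * P + w * b = 1`
      have hv : y + j (w * a) ∈ m := by
        have e : y + j (w * a) = j w * (j a + j b * y) + j P * (j u * y) := by
          have := congrArg j huw
          simp only [map_add, map_mul, map_one] at this ⊢
          linear_combination (-y) * this
        rw [e]
        exact add_mem (Ideal.mul_mem_left _ _ hz) (Ideal.mul_mem_right _ _ hPm)
      generalize w * a = v at hv
      have hvf : j (f - v ^ 2) ∈ m := by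
        have e : j (f - v ^ 2) = (y - j v) * (y + j v) := by
          simp only [map_sub, map_pow]; linear_combination -hyy
        rw [e]; exact Ideal.mul_mem_left _ _ hv
      obtain ⟨e, he⟩ := (hPd _).mp hvf
      refine ⟨j P, hPm, y - j v, ?_, ?_⟩
      · intro hs
        have h3 : j (C 2) * y ∈ m := by
          have := add_mem hs hv
          have e : j (C 2) * y = y - j v + (y + j v) := by
            have : (C (2 : k)) = 1 + 1 := by rw [← C_1, ← C_add]; norm_num
            rw [this, map_add, map_one]; ring
          rwa [e]
        rcases hm.mem_or_mem h3 with h4 | h4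
        · exact hm.ne_top (Ideal.eq_top_of_isUnit_mem _ h4
            ((isUnit_C.mpr (isUnit_iff_ne_zero.mpr h2)).map j))
        · exact hym h4
      · intro z hz
        obtain ⟨α, β, rfl⟩ := hrep z
        have h5 : j (α - β * v) ∈ m := by
          have := sub_mem hz (Ideal.mul_mem_left _ (j β) hv)
          have e : j (α - β * v) = j α + j β * y - j β * (y + j v) := by
            simp only [map_sub, map_mul]; ring
          rwa [e]
        obtain ⟨c, hc⟩ := (hPd _).mp h5
        refine ⟨(y - j v) * j c + j β * j e, ?_⟩
        have hc' := congrArg j hc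
        have he' := congrArg j he
        simp only [map_sub, map_mul, map_pow] at hc' he'
        linear_combination (y - j v) * hc' + j β * he' + j β * hyy

theorem locPrin_of_nakayama {R : Type*} [CommRing R] [IsNoetherianRing R]
    (I m : Ideal R) [hm : m.IsPrime] (x s q : R) (hx : x ∈ I) (hs : s ∉ m) (hq : q ∈ m)
    (h : ∀ y ∈ I, ∃ c, ∃ w ∈ I, s * y = x * c + q * w) : LocPrin I m := by
  let L := Localization.AtPrime m
  have key : I.map (algebraMap R L) ≤ Ideal.span {algebraMap R L x} := by
    apply Submodule.le_of_le_smul_of_le_jacobson_bot (I := IsLocalRing.maximalIdeal L)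
    · exact Ideal.FG.map ((inferInstance : IsNoetherianRing R).noetherian I) (algebraMap R L)
    · exact IsLocalRing.maximalIdeal_le_jacobson ⊥
    · rw [Ideal.map_le_iff_le_comap]
      intro y hy
      obtain ⟨c, w, hw, e⟩ := h y hy
      have hu : IsUnit (algebraMap R L s) :=
        IsLocalization.map_units L (⟨s, hs⟩ : m.primeCompl)
      change algebraMap R L y ∈ (Ideal.span {algebraMap R L x} ⊔
        IsLocalRing.maximalIdeal L * I.map (algebraMap R L) : Ideal L)
      rw [← Ideal.unit_mul_mem_iff_mem _ hu, ← map_mul, e, map_add, map_mul, map_mul]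
      apply add_mem
      · exact Ideal.mem_sup_left (Ideal.mul_mem_right _ _ (Ideal.mem_span_singleton_self _))
      · apply Ideal.mem_sup_right
        apply Ideal.mul_mem_mul _ (Ideal.mem_map_of_mem _ hw)
        rw [← Localization.AtPrime.map_eq_maximalIdeal]
        exact Ideal.mem_map_of_mem _ hq
  apply locPrin_of_pointwise I m x hx
  intro y hy
  obtain ⟨c, hc⟩ := Ideal.mem_span_singleton.mp (key (Ideal.mem_map_of_mem _ hy))
  obtain ⟨⟨c', ⟨d, hd⟩⟩, hcd⟩ := IsLocalization.surj m.primeCompl c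
  simp only at hcd
  have e : algebraMap R L (d * y) = algebraMap R L (x * c') := by
    rw [map_mul, map_mul, hc, ← hcd]; ring
  obtain ⟨⟨v, hv⟩, e2⟩ := (IsLocalization.eq_iff_exists m.primeCompl L).mp e
  simp only at e2
  refine ⟨v * d, fun hmem => (hm.mem_or_mem hmem).elim hv hd, v * c', ?_⟩
  linear_combination e2

theorem hypMap_mk {R S : Type*} [CommRing R] [CommRing S] (φ : R →+* S) (f : R[X])
    (p : R[X][X]) : HypMap R S φ f (HypRingR.mk R f p) =
      HypRingR.mk S (f.map φ) (p.map (Polynomial.mapRingHom φ)) := rfl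

theorem hypMap_rep {R S : Type*} [CommRing R] [CommRing S] (φ : R →+* S) (f : R[X])
    (a b : R[X]) : HypMap R S φ f
      (HypRingR.mk R f (C a) + HypRingR.mk R f (C b) * HypRingR.mk R f X) =
      HypRingR.mk S (f.map φ) (C (a.map φ)) +
        HypRingR.mk S (f.map φ) (C (b.map φ)) * HypRingR.mk S (f.map φ) X := by
  rw [map_add, map_mul, hypMap_mk, hypMap_mk, hypMap_mk]
  simp

/-- The structure map `R → R[X][Y]/⟨Y² − f⟩`. -/
noncomputable def hypC {R : Type*} [CommRing R] (f : R[X]) : R →+* HypRingR R f :=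
  (HypRingR.mk R f).comp (C.comp C)

theorem hypMap_hypC {R S : Type*} [CommRing R] [CommRing S] (φ : R →+* S) (f : R[X]) (r : R) :
    HypMap R S φ f (hypC f r) = hypC (f.map φ) (φ r) := by
  change HypMap R S φ f (HypRingR.mk R f (C (C r))) = HypRingR.mk S _ (C (C (φ r)))
  rw [hypMap_mk]; simp

theorem hypMap_injective {R S : Type*} [CommRing R] [CommRing S] [Nontrivial R] [Nontrivial S]
    (φ : R →+* S) (hφ : Function.Injective φ) (f : R[X]) :
    Function.Injective (HypMap R S φ f) := by
  rw [injective_iff_map_eq_zero]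
  intro z hz
  obtain ⟨a, b, rfl⟩ := hyp_rep f z
  rw [hypMap_rep] at hz
  obtain ⟨h1, h2⟩ := hyp_indep _ hz
  rw [Polynomial.map_eq_zero_iff hφ] at h1 h2
  simp [h1, h2]

theorem hypMap_surjective {R S : Type*} [CommRing R] [CommRing S] [Nontrivial S]
    (φ : R →+* S) (hφ : Function.Surjective φ) (f : R[X]) :
    Function.Surjective (HypMap R S φ f) := by
  intro z
  obtain ⟨a, b, rfl⟩ := hyp_rep _ z
  obtain ⟨a, rfl⟩ := Polynomial.map_surjective φ hφ a
  obtain ⟨b, rfl⟩ := Polynomial.map_surjective φ hφ b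
  exact ⟨_, hypMap_rep φ f a b⟩

theorem hypMap_ker {R S : Type*} [CommRing R] [CommRing S] [Nontrivial R] [Nontrivial S]
    (φ : R →+* S) (f : R[X]) (z : HypRingR R f) (hz : HypMap R S φ f z = 0) :
    ∃ a b : R[X], z = HypRingR.mk R f (C a) + HypRingR.mk R f (C b) * HypRingR.mk R f X ∧
      (∀ n, φ (a.coeff n) = 0) ∧ (∀ n, φ (b.coeff n) = 0) := by
  obtain ⟨a, b, rfl⟩ := hyp_rep f z
  rw [hypMap_rep] at hz
  obtain ⟨h1, h2⟩ := hyp_indep _ hz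
  refine ⟨a, b, rfl, fun n => ?_, fun n => ?_⟩
  · rw [← coeff_map, h1, coeff_zero]
  · rw [← coeff_map, h2, coeff_zero]

theorem hyp_coeff_mem {R : Type*} [CommRing R] (f : R[X]) (m : Ideal (HypRingR R f)) (a : R[X])
    (h : ∀ n, hypC f (a.coeff n) ∈ m) : HypRingR.mk R f (C a) ∈ m := by
  rw [a.as_sum_range_C_mul_X_pow, map_sum, map_sum]
  refine Ideal.sum_mem _ fun i _ => ?_
  rw [C_mul, map_mul]
  exact Ideal.mul_mem_right _ _ (h i)

theorem exists_local_uniformizer {O : Type*} [CommRing O] [IsDedekindDomain O] (p : Ideal O)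
    [hp : p.IsPrime] (hp0 : p ≠ ⊥) : ∃ π ∈ p, ∃ t, t ∉ p ∧ ∀ x ∈ p, π ∣ t * x := by
  obtain ⟨π, hπ, hπ2⟩ := Ideal.exists_mem_pow_notMem_pow_succ p hp0 hp.ne_top 1
  rw [pow_one] at hπ
  obtain ⟨q, hq⟩ := Ideal.dvd_iff_le.mpr ((Ideal.span_singleton_le_iff_mem p).mpr hπ)
  have hqp : ¬ q ≤ p := by
    intro h
    apply hπ2
    have : π ∈ p * q := hq ▸ Ideal.mem_span_singleton_self π
    rw [pow_two]
    exact Ideal.mul_mono_right h this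
  obtain ⟨t, htq, htp⟩ := Set.not_subset.mp hqp
  refine ⟨π, hπ, t, htp, fun x hx => ?_⟩
  rw [← Ideal.mem_span_singleton, hq, mul_comm t]
  exact Ideal.mul_mem_mul hx htq

theorem hyp_isLocalization {O K : Type*} [CommRing O] [IsDomain O] [Field K] [Algebra O K]
    [IsFractionRing O K] (f : O[X]) :
    letI := (HypMap O K (algebraMap O K) f).toAlgebra
    IsLocalization ((nonZeroDivisors O).map (hypC f)) (HypRingR K (f.map (algebraMap O K))) := by
  letI := (HypMap O K (algebraMap O K) f).toAlgebra
  have halg : ∀ z, algebraMap (HypRingR O f) (HypRingR K (f.map (algebraMap O K))) z =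
    HypMap O K (algebraMap O K) f z := fun _ => rfl
  refine (isLocalization_iff _ _).mpr ⟨?_, ?_, ?_⟩
  · rintro ⟨_, d, hd, rfl⟩
    simp only [halg, hypMap_hypC]
    have : algebraMap O K d ≠ 0 := by
      simpa using nonZeroDivisors.ne_zero hd
    exact (isUnit_iff_ne_zero.mpr this).map (hypC _)
  · intro z
    obtain ⟨a, b, rfl⟩ := hyp_rep _ z
    obtain ⟨⟨d, hd⟩, hd'⟩ := IsLocalization.integerNormalization_map_to_map (nonZeroDivisors O) a
    obtain ⟨⟨e, he⟩, he'⟩ := IsLocalization.integerNormalization_map_to_map (nonZeroDivisors O) b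
    set a' := IsLocalization.integerNormalization (nonZeroDivisors O) a
    set b' := IsLocalization.integerNormalization (nonZeroDivisors O) b
    refine ⟨⟨HypRingR.mk O f (C (C e * a')) + HypRingR.mk O f (C (C d * b')) * HypRingR.mk O f X,
      ⟨hypC f (d * e), _, mul_mem hd he, rfl⟩⟩, ?_⟩
    simp only [halg, hypMap_hypC, hypMap_rep, Polynomial.map_mul, map_C, hd', he']
    change _ * HypRingR.mk K _ (C (C _)) = _
    simp only [Algebra.smul_def, Submonoid.smul_def, map_mul, Polynomial.algebraMap_apply]
    ring
  · intro x y hxy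
    exact ⟨1, by rw [hypMap_injective _ (IsFractionRing.injective O K) f hxy]⟩

theorem hyp_fibre_locPrin {O F : Type*} [CommRing O] [Field F] (φ : O →+* F)
    (f : O[X]) (hmonic : f.Monic) (hodd : Odd f.natDegree)
    (h2 : IsUnit (2 : O)) (hsep : IsCoprime f (derivative f))
    (m : Ideal (HypRingR F (f.map φ))) [hm : m.IsPrime]
    (I : Ideal (HypRingR F (f.map φ))) : LocPrin I m := by
  apply hyp_field_locPrin
  · rwa [hmonic.natDegree_map]
  · have := (h2.map φ).ne_zero
    rwa [map_ofNat] at this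
  · rw [derivative_map]
    exact hsep.map (Polynomial.mapRingHom φ)

theorem hyp_comap_locPrin {O K : Type*} [CommRing O] [IsDedekindDomain O] [Field K] [Algebra O K]
    [IsFractionRing O K] (f : O[X]) (hmonic : f.Monic) (hodd : Odd f.natDegree)
    (h2 : IsUnit (2 : O)) (hsep : IsCoprime f (derivative f))
    (J : Ideal (HypRingR K (f.map (algebraMap O K))))
    (m : Ideal (HypRingR O f)) [hm : m.IsPrime] :
    LocPrin (J.comap (HypMap O K (algebraMap O K) f)) m := by
  have hA := hyp_isNoetherian f
  have hinj := hypMap_injective _ (IsFractionRing.injective O K) f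
  letI : Algebra (HypRingR O f) (HypRingR K (f.map (algebraMap O K))) :=
    (HypMap O K (algebraMap O K) f).toAlgebra
  have hloc := hyp_isLocalization (K := K) f
  have hψ : HypMap O K (algebraMap O K) f =
    algebraMap (HypRingR O f) (HypRingR K (f.map (algebraMap O K))) := rfl
  rw [hψ] at hinj ⊢
  set ψ := algebraMap (HypRingR O f) (HypRingR K (f.map (algebraMap O K))) with hψ'
  have hp : (m.comap (hypC f)).IsPrime := Ideal.comap_isPrime _ _
  by_cases hp0 : m.comap (hypC f) = ⊥
  · have hdisj : Disjoint (((nonZeroDivisors O).map (hypC f) : Submonoid _) : Set (HypRingR O f))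
        (m : Set _) := by
      rw [Set.disjoint_left]
      rintro _ ⟨d, hd, rfl⟩ hmem
      have : d ∈ m.comap (hypC f) := hmem
      rw [hp0] at this
      exact nonZeroDivisors.ne_zero hd this
    have hm' : (m.map ψ).IsPrime :=
      IsLocalization.isPrime_of_isPrime_disjoint ((nonZeroDivisors O).map (hypC f)) _ m hm hdisj
    obtain ⟨x', hx', s', hs', h⟩ := hyp_fibre_locPrin (algebraMap O K) f hmonic hodd h2 hsep
      (m.map ψ) J
    obtain ⟨⟨x, e⟩, hx⟩ := IsLocalization.surj ((nonZeroDivisors O).map (hypC f)) x'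
    obtain ⟨⟨s, e'⟩, hs⟩ := IsLocalization.surj ((nonZeroDivisors O).map (hypC f)) s'
    simp only [← hψ'] at hx hs
    have hM : ∀ e : (nonZeroDivisors O).map (hypC f), (e : HypRingR O f) ∉ m :=
      fun e he => Set.disjoint_left.mp hdisj e.2 he
    have hsm : s ∉ m := by
      intro hmem
      apply hs'
      have hu := IsLocalization.map_units (HypRingR K (f.map (algebraMap O K))) e'
      rw [← Ideal.mul_unit_mem_iff_mem _ hu, ← hψ', hs]
      exact Ideal.mem_map_of_mem _ hmem
    apply locPrin_of_pointwise _ _ x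
    · change ψ x ∈ J
      rw [← hx]; exact Ideal.mul_mem_right _ _ hx'
    · intro y hy
      obtain ⟨c, hc⟩ := h (ψ y) hy
      obtain ⟨⟨c', d⟩, hd⟩ := IsLocalization.surj ((nonZeroDivisors O).map (hypC f)) c
      simp only [← hψ'] at hd
      refine ⟨s * e * d, fun hmem => ?_, e' * c', ?_⟩
      · rcases hm.mem_or_mem hmem with h1 | h1
        · exact (hm.mem_or_mem h1).elim hsm (hM e)
        · exact hM d h1
      · apply hinj
        simp only [map_mul, ← hx, ← hs, ← hd]
        linear_combination (ψ e' * ψ e * ψ d) * hc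
  · set p := m.comap (hypC f) with hpdef
    have hmax : p.IsMaximal := hp.isMaximal hp0
    letI : Field (O ⧸ p) := Ideal.Quotient.field p
    obtain ⟨π, hπ, t, ht, hdvd⟩ := exists_local_uniformizer p hp0
    set σ := HypMap O (O ⧸ p) (Ideal.Quotient.mk p) f with hσ
    have hσs : Function.Surjective σ := hypMap_surjective _ Ideal.Quotient.mk_surjective f
    have hker : RingHom.ker σ ≤ m := by
      intro z hz
      obtain ⟨a, b, rfl, ha, hb⟩ := hypMap_ker _ f z hz
      simp only [Ideal.Quotient.eq_zero_iff_mem] at ha hb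
      exact add_mem (hyp_coeff_mem f m a ha) (Ideal.mul_mem_right _ _ (hyp_coeff_mem f m b hb))
    have hm' : (m.map σ).IsPrime := Ideal.map_isPrime_of_surjective hσs hker
    obtain ⟨x', hx', s', hs', h⟩ := hyp_fibre_locPrin (Ideal.Quotient.mk p) f hmonic hodd h2 hsep
      (m.map σ) ((J.comap ψ).map σ)
    obtain ⟨x, hx, rfl⟩ := (Ideal.mem_map_iff_of_surjective σ hσs).mp hx'
    obtain ⟨s, rfl⟩ := hσs s'
    have hsm : s ∉ m := fun hmem => hs' (Ideal.mem_map_of_mem _ hmem)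
    apply locPrin_of_nakayama _ m x (hypC f t * s) (hypC f π) hx
      (fun hmem => (hm.mem_or_mem hmem).elim ht hsm) hπ
    intro y hy
    obtain ⟨c, hc⟩ := h (σ y) (Ideal.mem_map_of_mem _ hy)
    obtain ⟨c, rfl⟩ := hσs c
    have hz : σ (s * y - x * c) = 0 := by rw [map_sub, map_mul, map_mul, hc, sub_self]
    obtain ⟨a, b, hab, ha, hb⟩ := hypMap_ker _ f _ hz
    simp only [Ideal.Quotient.eq_zero_iff_mem] at ha hb
    have hdiv : ∀ a : O[X], (∀ n, a.coeff n ∈ p) → ∃ a', C t * a = C π * a' := by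
      intro a ha
      change C π ∣ _
      rw [C_dvd_iff_dvd_coeff]
      intro i
      rw [coeff_C_mul]
      exact hdvd _ (ha i)
    obtain ⟨a', ha'⟩ := hdiv a ha
    obtain ⟨b', hb'⟩ := hdiv b hb
    set w := HypRingR.mk O f (C a') + HypRingR.mk O f (C b') * HypRingR.mk O f X with hw
    have hw1 : hypC f t * (s * y - x * c) = hypC f π * w := by
      have e1 := congrArg (fun q => HypRingR.mk O f (C q)) ha'
      have e2 := congrArg (fun q => HypRingR.mk O f (C q)) hb'
      simp only [map_mul] at e1 e2
      change hypC f t * _ = hypC f π * _ at e1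
      change hypC f t * _ = hypC f π * _ at e2
      rw [hab, hw]
      linear_combination e1 + e2 * HypRingR.mk O f X
    have hπ0 : π ≠ 0 := by
      rintro rfl
      apply hp0
      rw [eq_bot_iff]
      intro r hr
      have := hdvd r hr
      rw [zero_dvd_iff] at this
      exact (mul_eq_zero.mp this).resolve_left (fun h => ht (h ▸ zero_mem _))
    have hwI : w ∈ J.comap ψ := by
      have hu : IsUnit (ψ (hypC f π)) :=
        IsLocalization.map_units (M := (nonZeroDivisors O).map (hypC f))
          (HypRingR K (f.map (algebraMap O K)))
          ⟨hypC f π, π, mem_nonZeroDivisors_of_ne_zero hπ0, rfl⟩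
      change ψ w ∈ J
      rw [← Ideal.unit_mul_mem_iff_mem _ hu, ← map_mul, ← hw1]
      change _ ∈ J.comap ψ
      exact Ideal.mul_mem_left _ _ (sub_mem (Ideal.mul_mem_left _ _ hy)
        (Ideal.mul_mem_right _ _ hx))
    exact ⟨hypC f t * c, w, hwI, by linear_combination hw1⟩

theorem hyp_main {O K : Type*} [CommRing O] [IsDedekindDomain O] [Field K] [Algebra O K]
    [IsFractionRing O K] (f : O[X]) (hmonic : f.Monic) (hodd : Odd f.natDegree)
    (h2 : IsUnit (2 : O)) (hsep : IsCoprime f (derivative f))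
    (J : Ideal (HypRingR K (f.map (algebraMap O K)))) (hJ : J ≠ ⊥) :
    ∃ I : Ideal (HypRingR O f),
      IsUnit (I : FractionalIdeal (HypRingR O f)⁰ (FractionRing (HypRingR O f))) ∧
      ∃ g h : HypRingR K (f.map (algebraMap O K)),
        g ≠ 0 ∧ h ≠ 0 ∧
        Ideal.span {g} * J = Ideal.span {h} * (I.map (HypMap O K (algebraMap O K) f)) := by
  have := hyp_isDomain f hodd
  have := hyp_isDomain (f.map (algebraMap O K)) (by rwa [hmonic.natDegree_map])
  letI : Algebra (HypRingR O f) (HypRingR K (f.map (algebraMap O K))) :=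
    (HypMap O K (algebraMap O K) f).toAlgebra
  have hloc := hyp_isLocalization (K := K) f
  have hmc : (J.comap (HypMap O K (algebraMap O K) f)).map (HypMap O K (algebraMap O K) f) = J :=
    IsLocalization.map_comap ((nonZeroDivisors O).map (hypC f)) _ J
  refine ⟨J.comap (HypMap O K (algebraMap O K) f), isUnit_of_locPrin _ ?_ ?_, 1, 1,
    one_ne_zero, one_ne_zero, by rw [hmc]⟩
  · intro h
    rw [h, Ideal.map_bot] at hmc
    exact hJ hmc.symm
  · intro m hm
    have := hm.isPrime
    exact hyp_comap_locPrin f hmonic hodd h2 hsep J m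

section SIntegers

variable (K : Type*) [Field K] [NumberField K] (S : Finset (HeightOneSpectrum (𝓞 K)))

theorem exists_mem_S : ∃ a : 𝓞 K, a ≠ 0 ∧ (∀ v ∈ S, a ∈ v.asIdeal) ∧ ∀ v, v ∉ S → a ∉ v.asIdeal := by
  have hq : ∀ q : HeightOneSpectrum (𝓞 K), ∃ a : 𝓞 K, a ≠ 0 ∧ a ∈ q.asIdeal ∧
      ∀ v : HeightOneSpectrum (𝓞 K), a ∈ v.asIdeal → v = q := by
    intro q
    have hq0 : q.asIdeal ∈ (Ideal (𝓞 K))⁰ := mem_nonZeroDivisors_of_ne_zero q.ne_bot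
    set n := Fintype.card (ClassGroup (𝓞 K))
    have hn : n ≠ 0 := Fintype.card_ne_zero
    have h1 : ClassGroup.mk0 (⟨q.asIdeal, hq0⟩ ^ n) = 1 := by
      rw [map_pow, pow_card_eq_one]
    have h2 := (ClassGroup.mk0_eq_one_iff (I := q.asIdeal ^ n) (pow_mem hq0 n)).mp h1
    obtain ⟨a, ha⟩ := h2.principal
    rw [Ideal.submodule_span_eq] at ha
    refine ⟨a, ?_, ?_, ?_⟩
    · rintro rfl
      rw [Ideal.span_singleton_eq_bot.mpr rfl] at ha
      exact pow_ne_zero n q.ne_bot ha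
    · have : a ∈ q.asIdeal ^ n := ha ▸ Ideal.mem_span_singleton_self a
      exact Ideal.pow_le_self hn this
    · intro v hv
      have h3 : q.asIdeal ^ n ≤ v.asIdeal := by
        rw [ha]; exact (Ideal.span_singleton_le_iff_mem _).mpr hv
      have h4 : q.asIdeal ≤ v.asIdeal := v.isPrime.le_of_pow_le h3
      exact HeightOneSpectrum.ext (q.isMaximal.eq_of_le v.isPrime.ne_top h4).symm
  choose a ha0 ha hav using hq
  refine ⟨∏ q ∈ S, a q, Finset.prod_ne_zero_iff.mpr fun q _ => ha0 q, fun v hv => ?_, fun v hv hmem => ?_⟩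
  · exact Ideal.mem_of_dvd _ (Finset.dvd_prod_of_mem a hv) (ha v)
  · have := v.isPrime
    obtain ⟨q, hq, hq'⟩ := Ideal.IsPrime.prod_mem_iff.mp hmem
    rw [hav q v hq'] at hv
    exact hv hq

/-- The nonzero elements of `𝓞 K` that are units away from `S`. -/
def SMon : Submonoid (𝓞 K) where
  carrier := {a | a ≠ 0 ∧ ∀ v, v ∉ S → a ∉ v.asIdeal}
  one_mem' := ⟨one_ne_zero, fun v _ h => v.isPrime.ne_top ((Ideal.eq_top_iff_one _).mpr h)⟩
  mul_mem' := fun ha hb => ⟨mul_ne_zero ha.1 hb.1,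
    fun v hv h => (v.isPrime.mem_or_mem h).elim (ha.2 v hv) (hb.2 v hv)⟩

theorem SInt_pow_mul (x : K) (hx : ∀ v, v ∉ S → v.valuation K x ≤ 1) :
    ∃ a ∈ SMon K S, ∃ b : 𝓞 K, x * algebraMap (𝓞 K) K a = algebraMap (𝓞 K) K b := by
  obtain ⟨a, ha0, ha, haS⟩ := exists_mem_S K S
  have hle : ∀ v : HeightOneSpectrum (𝓞 K), v.valuation K (algebraMap (𝓞 K) K a) ≤ 1 :=
    fun v => v.valuation_le_one a
  have hN : ∀ v ∈ S, ∃ n : ℕ, v.valuation K x * v.valuation K (algebraMap (𝓞 K) K a) ^ n ≤ 1 := by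
    intro v hv
    by_cases hx0 : x = 0
    · exact ⟨0, by simp [hx0]⟩
    · have hvx : v.valuation K x ≠ 0 := (Valuation.ne_zero_iff _).mpr hx0
      have hlt : v.valuation K (algebraMap (𝓞 K) K a) < 1 :=
        (v.valuation_lt_one_iff_mem a).mpr (ha v hv)
      obtain ⟨n, hn⟩ := exists_pow_lt₀ hlt (Units.mk0 _ (inv_ne_zero hvx))
      refine ⟨n, ?_⟩
      calc _ ≤ v.valuation K x * (v.valuation K x)⁻¹ := by
            gcongr
            exact hn.le
        _ = 1 := mul_inv_cancel₀ hvx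
  choose! n hn using hN
  have hmem : a ^ (∑ v ∈ S, n v) ∈ SMon K S := pow_mem (⟨ha0, haS⟩ : a ∈ SMon K S) _
  refine ⟨a ^ (∑ v ∈ S, n v), hmem, ?_⟩
  obtain ⟨b, hb⟩ := HeightOneSpectrum.mem_integers_of_valuation_le_one K
    (x * algebraMap (𝓞 K) K (a ^ (∑ v ∈ S, n v))) (by
      intro v
      rw [map_mul, map_pow, map_pow]
      by_cases hv : v ∈ S
      · refine le_trans ?_ (hn v hv)
        refine mul_le_mul_right ?_ _
        exact pow_le_pow_of_le_one zero_le (hle v)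
          (Finset.single_le_sum (f := n) (fun _ _ => Nat.zero_le _) hv)
      · exact mul_le_one₀ (hx v hv) zero_le (pow_le_one₀ zero_le (hle v)))
  exact ⟨b, hb.symm⟩

theorem SInt_isLocalization : IsLocalization (SMon K S) (SInt K S) := by
  refine (isLocalization_iff _ _).mpr ⟨?_, ?_, ?_⟩
  · rintro ⟨a, ha0, ha⟩
    have ha0' : algebraMap (𝓞 K) K a ≠ 0 := by simpa using ha0
    have hinv : (algebraMap (𝓞 K) K a)⁻¹ ∈ (S : Set (HeightOneSpectrum (𝓞 K))).integer K := by
      intro v hv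
      rw [map_inv₀, (v.valuation_eq_one_iff_notMem).mpr (ha v hv), inv_one]
    refine IsUnit.of_mul_eq_one ⟨_, hinv⟩ ?_
    apply Subtype.ext
    exact mul_inv_cancel₀ ha0'
  · rintro ⟨x, hx⟩
    obtain ⟨a, ha, b, hb⟩ := SInt_pow_mul K S x hx
    exact ⟨⟨b, ⟨a, ha⟩⟩, Subtype.ext hb⟩
  · intro x y hxy
    refine ⟨1, ?_⟩
    have : algebraMap (𝓞 K) K x = algebraMap (𝓞 K) K y := congrArg (fun z : SInt K S => (z : K)) hxy
    rw [IsFractionRing.injective (𝓞 K) K this]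

theorem SInt_isDedekindDomain : IsDedekindDomain (SInt K S) := by
  have := SInt_isLocalization K S
  exact IsLocalization.isDedekindDomain (𝓞 K) (M := SMon K S)
    (fun a ha => mem_nonZeroDivisors_of_ne_zero ha.1) (SInt K S)

theorem SInt_isFractionRing : IsFractionRing (SInt K S) K := by
  have := SInt_isLocalization K S
  exact IsFractionRing.isFractionRing_of_isDomain_of_isLocalization (SMon K S) (SInt K S) K

end SIntegers

/-- **Surjectivity of the restriction to the generic fibre `Pic(A) → Pic(B)`.**
`K` a number field, `S` a finite set of primes such that `2` and the
discriminant of `f` are invertible in `O = O_{K,S}` (the invertibility of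
`disc(f)`, for `f` monic, being expressed by the unimodular row condition that
`f` and its derivative generate the unit ideal of `O[X]`), with `f ∈ O_K[X]`
monic squarefree of odd degree `≥ 3`. Let `A := O[X][Y]/⟨Y² − f⟩` and
`B := K[X][Y]/⟨Y² − f⟩`. Then every nonzero ideal `J` of `B` is, up to nonzero
principal factors, the extension of an ideal `I` of `A` which is invertible as
a fractional ideal of `A`: `⟨g⟩·J = ⟨h⟩·(I·B)` for some nonzero `g, h ∈ B`. -/
theorem restriction_to_generic_fibre_surjective
    (K : Type*) [Field K] [NumberField K]
    (S : Finset (HeightOneSpectrum (𝓞 K)))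
    (f : Polynomial (𝓞 K)) (hmonic : f.Monic) (hsqfree : Squarefree f)
    (hodd : Odd f.natDegree) (hdeg : 3 ≤ f.natDegree)
    (h2 : IsUnit (2 : SInt K S))
    (hdisc : IsCoprime (f.map (algebraMap (𝓞 K) (SInt K S)))
        (derivative (f.map (algebraMap (𝓞 K) (SInt K S)))))
    (J : Ideal (HypRingR K ((f.map (algebraMap (𝓞 K) (SInt K S))).map
        (algebraMap (SInt K S) K))))
    (hJ : J ≠ ⊥) :
    ∃ I : Ideal (HypRingR (SInt K S) (f.map (algebraMap (𝓞 K) (SInt K S)))),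
      IsUnit (I : FractionalIdeal
          (HypRingR (SInt K S) (f.map (algebraMap (𝓞 K) (SInt K S))))⁰
          (FractionRing (HypRingR (SInt K S) (f.map (algebraMap (𝓞 K) (SInt K S)))))) ∧
      ∃ g h : HypRingR K ((f.map (algebraMap (𝓞 K) (SInt K S))).map (algebraMap (SInt K S) K)),
        g ≠ 0 ∧ h ≠ 0 ∧
        Ideal.span {g} * J =
          Ideal.span {h} * (I.map (HypMap (SInt K S) K (algebraMap (SInt K S) K)
            (f.map (algebraMap (𝓞 K) (SInt K S))))) := by
  have hD := SInt_isDedekindDomain K S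
  have hF := SInt_isFractionRing K S
  exact hyp_main _ (hmonic.map _) (by rwa [hmonic.natDegree_map]) h2 hdisc J hJ
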